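/- The normalized polynomials Q_w = S_w P_w are orthonormal: for all natural numbers i, j, ∫_{-1}^{1} Q_i(x) W_{p,n}(x) Q_j(x)^T dx = δ_{ij} · I, where I is the 2×2 identity matrix. -/

import Mathlib

open Matrix

/-- Pochhammer symbol `(a)_k = a (a+1) ⋯ (a+k-1)`. -/
noncomputable def poch (a : ℝ) (k : ℕ) : ℝ := ∏ i ∈ Finset.range k, (a + i)

/-- Gegenbauer polynomial `C_w^λ(x)`, with the convention `C_w^λ = 0` for `w < 0`. -/
noncomputable def geg (l : ℝ) (w : ℤ) (x : ℝ) : ℝ :=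
  if w < 0 then 0 else
    poch (2 * l) w.toNat / (w.toNat.factorial : ℝ) *
      ∑ k ∈ Finset.range (w.toNat + 1),
        (poch (-(w.toNat : ℝ)) k * poch ((w.toNat : ℝ) + 2 * l) k) /
            (poch (l + 1 / 2) k * (k.factorial : ℝ)) * ((1 - x) / 2) ^ k

/-- The weight matrix `W_{p,n}(x)`. -/
noncomputable def Wmat (n : ℕ) (p : ℝ) (x : ℝ) : Matrix (Fin 2) (Fin 2) ℝ :=
  (1 - x ^ 2) ^ ((n : ℝ) / 2 - 1) •
    !![p * x ^ 2 + (n : ℝ) - p, -(n : ℝ) * x; -(n : ℝ) * x, ((n : ℝ) - p) * x ^ 2 + p]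

/-- The matrix valued polynomial `P_w`. -/
noncomputable def Pmat (n : ℕ) (p : ℝ) (w : ℕ) (x : ℝ) : Matrix (Fin 2) (Fin 2) ℝ :=
  !![1 / ((n : ℝ) + 1) * geg (((n : ℝ) + 1) / 2) (w : ℤ) x +
        1 / (p + w) * geg (((n : ℝ) + 3) / 2) ((w : ℤ) - 2) x,
      1 / (p + w) * geg (((n : ℝ) + 3) / 2) ((w : ℤ) - 1) x;
      1 / ((n : ℝ) - p + w) * geg (((n : ℝ) + 3) / 2) ((w : ℤ) - 1) x,
      1 / ((n : ℝ) + 1) * geg (((n : ℝ) + 1) / 2) (w : ℤ) x +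
        1 / ((n : ℝ) - p + w) * geg (((n : ℝ) + 3) / 2) ((w : ℤ) - 2) x]

/-- The normalizing matrix `S_w`: the (diagonal, positive definite) inverse square root
of `‖P_w‖² = ∫_{-1}^1 P_w W_{p,n} P_w^T dx`, given explicitly. -/
noncomputable def Smat (n : ℕ) (p : ℝ) (w : ℕ) : Matrix (Fin 2) (Fin 2) ℝ :=
  Real.sqrt (((w.factorial : ℝ) * ((n : ℝ) + 1) * ((n : ℝ) + 2 * w + 1) *
        Real.Gamma ((n : ℝ) / 2 + 3 / 2)) /
      (Real.sqrt Real.pi * 2 ^ (w / 2) * Real.Gamma ((n : ℝ) / 2 + 1 + (w / 2 : ℕ)) *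
        ∏ k ∈ Finset.range ((w + 1) / 2), ((n : ℝ) + 2 * k + 1))) •
    Matrix.diagonal ![Real.sqrt ((p + w) / (p * ((n : ℝ) - p + w + 1))),
      Real.sqrt (((n : ℝ) - p + w) / (((n : ℝ) - p) * (p + w + 1)))]

/-- The orthonormal matrix valued polynomials `Q_w = S_w P_w`. -/
noncomputable def Qmat (n : ℕ) (p : ℝ) (w : ℕ) (x : ℝ) : Matrix (Fin 2) (Fin 2) ℝ :=
  Smat n p w * Pmat n p w x

noncomputable def aco (l : ℝ) (w k : ℕ) : ℝ :=
  poch (2 * l) w / (w.factorial : ℝ) *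
    ((poch (-(w : ℝ)) k * poch ((w : ℝ) + 2 * l) k) / (poch (l + 1 / 2) k * (k.factorial : ℝ)))

lemma poch_succ (a : ℝ) (k : ℕ) : poch a (k + 1) = poch a k * (a + k) := by
  simp [poch, Finset.prod_range_succ]

lemma poch_succ' (a : ℝ) (k : ℕ) : poch a (k + 1) = a * poch (a + 1) k := by
  simp only [poch, Finset.prod_range_succ']
  rw [mul_comm]
  congr 1
  · simp
  · refine Finset.prod_congr rfl fun i _ => ?_
    push_cast; ring

lemma poch_pos {a : ℝ} (ha : 0 < a) (k : ℕ) : 0 < poch a k :=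
  Finset.prod_pos fun i _ => by positivity

lemma poch_neg_zero (w k : ℕ) (h : w < k) : poch (-(w : ℝ)) k = 0 :=
  Finset.prod_eq_zero (Finset.mem_range.2 h) (by simp)

lemma aco_zero (l : ℝ) (w k : ℕ) (h : w < k) : aco l w k = 0 := by
  simp [aco, poch_neg_zero w k h]

lemma aco_k (l : ℝ) (hl : 0 < l) (w k : ℕ) :
    aco l w (k + 1) * ((l + 1 / 2 + k) * (k + 1)) = aco l w k * ((k - w) * (w + 2 * l + k)) := by
  have h1 := (poch_pos (show 0 < l + 1 / 2 by positivity) k).ne'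
  have h2 : (l + 1 / 2 + k) ≠ 0 := by positivity
  have h3 : ((k.factorial : ℕ) : ℝ) ≠ 0 := by positivity
  have h4 : (k : ℝ) + 1 ≠ 0 := by positivity
  have h5 : ((w.factorial : ℕ) : ℝ) ≠ 0 := by positivity
  simp only [aco, poch_succ, Nat.factorial_succ]
  push_cast
  generalize l + 1 / 2 + (k : ℝ) = c at *
  generalize poch (l + 1/2) k = d at *
  field_simp
  ring

lemma aco_w (l : ℝ) (hl : 0 < l) (w k : ℕ) :
    aco l (w + 1) k * (w + 1 - k) = aco l w k * (w + 2 * l + k) := by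
  have h1 := (poch_pos (show 0 < l + 1 / 2 by positivity) k).ne'
  have h3 : ((k.factorial : ℕ) : ℝ) ≠ 0 := by positivity
  have h4 : (w : ℝ) + 1 ≠ 0 := by positivity
  have h5 : ((w.factorial : ℕ) : ℝ) ≠ 0 := by positivity
  have e1 : poch (-((w + 1 : ℕ) : ℝ)) k * (w + 1 - k) = (w + 1) * poch (-(w : ℝ)) k := by
    have := (poch_succ (-((w + 1 : ℕ) : ℝ)) k).symm.trans (poch_succ' _ k)
    rw [show -((w + 1 : ℕ) : ℝ) + 1 = -(w : ℝ) by push_cast; ring] at this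
    push_cast at this ⊢
    linarith
  have e2 : (w + 2 * l) * poch (((w + 1 : ℕ) : ℝ) + 2 * l) k
      = poch (w + 2 * l) k * (w + 2 * l + k) := by
    have := (poch_succ (w + 2 * l) k).symm.trans (poch_succ' _ k)
    rw [this]
    congr 2
    push_cast; ring
  simp only [aco, poch_succ, Nat.factorial_succ]
  generalize poch (-((w + 1 : ℕ) : ℝ)) k = u at *
  generalize poch (((w + 1 : ℕ) : ℝ) + 2 * l) k = v at *
  generalize poch (l + 1/2) k = d at *
  generalize poch (w + 2 * l) k = v' at *
  generalize poch (-(w : ℝ)) k = u' at *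
  push_cast
  have e3 : u * (w + 1 - k) * ((w + 2 * l) * v) = (w + 1) * u' * (v' * (w + 2 * l + k)) := by
    rw [e1, e2]
  field_simp
  linear_combination poch (2 * l) w * e3

lemma aco_l (l : ℝ) (hl : 0 < l) (w k : ℕ) :
    aco l (w + 1) (k + 1) * (k + 1) * (-1 / 2) = 2 * l * aco (l + 1) w k := by
  have h0 := (poch_pos (show 0 < l + 1 / 2 + 1 by positivity) k).ne'
  have h2 : (l + 1 / 2) ≠ 0 := by positivity
  have h3 : ((k.factorial : ℕ) : ℝ) ≠ 0 := by positivity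
  have h4 : (w : ℝ) + 1 ≠ 0 := by positivity
  have h6 : (k : ℝ) + 1 ≠ 0 := by positivity
  have h5 : ((w.factorial : ℕ) : ℝ) ≠ 0 := by positivity
  have e1 : poch (-((w + 1 : ℕ) : ℝ)) (k + 1) = -(w + 1) * poch (-(w : ℝ)) k := by
    rw [poch_succ']; push_cast; congr 2; ring
  have e2 : 2 * l * (2 * l + 1) * poch (2 * (l + 1)) w = poch (2 * l) (w + 1) * (w + 1 + 2 * l) := by
    have := (poch_succ (2 * l) (w + 1)).symm.trans (poch_succ' _ (w + 1))
    rw [poch_succ' (2 * l + 1), show 2 * l + 1 + 1 = 2 * (l + 1) by ring] at this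
    push_cast at this
    linarith
  have e3 : poch (((w + 1 : ℕ) : ℝ) + 2 * l) (k + 1)
      = (w + 1 + 2 * l) * poch (w + 2 * (l + 1)) k := by
    rw [poch_succ']; push_cast; congr 2; ring
  simp only [aco, Nat.factorial_succ]
  rw [e1, e3, poch_succ' (l + 1 / 2), show l + 1 + 1 / 2 = l + 1 / 2 + 1 by ring]
  generalize poch (l + 1/2 + 1) k = d at *
  generalize poch (w + 2 * (l + 1)) k = v' at *
  generalize poch (-(w : ℝ)) k = u' at *
  generalize poch (2 * l) (w + 1) = s at *
  generalize poch (2 * (l + 1)) w = t at *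
  push_cast
  have h7 : 2 * l + 1 ≠ 0 := by positivity
  have h8 : l ≠ 0 := hl.ne'
  have e4 : t = s * (w + 1 + 2 * l) / (2 * l * (2 * l + 1)) := by
    field_simp; linarith
  rw [e4]
  have h9 : l + 1 / 2 = (2 * l + 1) / 2 := by ring
  rw [h9]
  field_simp

section
open Polynomial

noncomputable def Ay (l : ℝ) (w : ℕ) : ℝ[X] := ∑ k ∈ Finset.range (w + 1), C (aco l w k) * X ^ k

lemma Ay_coeff (l : ℝ) (w k : ℕ) : (Ay l w).coeff k = aco l w k := by
  simp only [Ay, finsetSum_coeff, coeff_C_mul, coeff_X_pow]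
  simp only [mul_ite, mul_one, mul_zero, Finset.sum_ite_eq, Finset.mem_range]
  split_ifs with h
  · rfl
  · rw [aco_zero]; omega

noncomputable def yy : ℝ[X] := C (1 / 2) * (1 - X)

noncomputable def Fp (l : ℝ) (w : ℕ) : ℝ[X] := (Ay l w).comp yy

lemma geg_eq (l : ℝ) (w : ℕ) (x : ℝ) : geg l (w : ℤ) x = (Fp l w).eval x := by
  simp only [geg, Fp, Ay, yy, aco, eval_comp, eval_finsetSum]
  rw [if_neg (by omega), Finset.mul_sum]
  refine Finset.sum_congr (by simp) fun k _ => ?_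
  simp
  ring

lemma geg_neg (l : ℝ) (w : ℤ) (hw : w < 0) (x : ℝ) : geg l w x = 0 := by simp [geg, hw]

lemma der_yy : derivative yy = C (-1 / 2) := by
  have : derivative yy = C (1 / 2) * (-1) := by simp only [yy, derivative_C_mul, derivative_sub, derivative_one, derivative_X, zero_sub]
  rw [this, show (-1 : ℝ[X]) = C (-1) by simp, ← C_mul]
  norm_num

lemma X_eq : (X : ℝ[X]) = 1 - 2 * yy := by
  have : (2 : ℝ[X]) * C (1 / 2) = 1 := by
    rw [show (2 : ℝ[X]) = C 2 from rfl, ← C_mul]; norm_num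
  rw [yy, ← mul_assoc, this]; ring

lemma Ay_l (l : ℝ) (hl : 0 < l) (w : ℕ) :
    C (-1 / 2) * derivative (Ay l (w + 1)) = C (2 * l) * Ay (l + 1) w := by
  ext k
  rw [coeff_C_mul, coeff_C_mul, coeff_derivative, Ay_coeff, Ay_coeff, ← aco_l l hl]
  ring

lemma Ay_ode (l : ℝ) (hl : 0 < l) (w : ℕ) :
    X * derivative (derivative (Ay l w)) - X * (X * derivative (derivative (Ay l w)))
      + C (l + 1 / 2) * (derivative (Ay l w) - 2 * (X * derivative (Ay l w)))
      + C (w * (w + 2 * l)) * Ay l w = 0 := by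
  ext k
  have h2 : (2 : ℝ[X]) = C 2 := rfl
  rw [h2]
  rcases k with _ | _ | k
  · have := aco_k l hl w 0
    simp [Ay_coeff, coeff_derivative, -map_mul, -map_add] at this ⊢
    linarith
  · have := aco_k l hl w 1
    simp [Ay_coeff, coeff_derivative, coeff_X_mul, -map_mul, -map_add] at this ⊢
    linarith
  · have := aco_k l hl w (k + 2)
    simp [Ay_coeff, coeff_derivative, coeff_X_mul, -map_mul, -map_add] at this ⊢
    linarith

lemma Ay_c (l : ℝ) (hl : 0 < l) (w : ℕ) :
    C (-1 / 2) * (derivative (Ay l (w + 1)) - 2 * (X * derivative (Ay l (w + 1))))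
      - C (-1 / 2) * derivative (Ay l w) = C ((w : ℝ) + 1) * Ay l (w + 1) := by
  have key : ∀ k : ℕ, -1 / 2 * (aco l (w + 1) (k + 1) * (k + 1)) + k * aco l (w + 1) k
      + 1 / 2 * (aco l w (k + 1) * (k + 1)) = (w + 1) * aco l (w + 1) k := by
    intro k
    have h1 := aco_k l hl (w + 1) k
    have h2 := aco_k l hl w k
    have h3 := aco_w l hl w k
    have h4 : (l + 1 / 2 + k) ≠ 0 := by positivity
    apply mul_right_cancel₀ h4
    push_cast at h1
    linear_combination (-1 / 2) * h1 + (1 / 2) * h2 - (l+1/2+k) * h3 + (1/2) * (w + 1 + 2 * l + k) * h3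
  ext k
  have h2 : (2 : ℝ[X]) = C 2 := rfl
  rw [h2]
  rcases k with _ | k
  · have := key 0
    simp [Ay_coeff, coeff_derivative, -map_mul, -map_add] at this ⊢
    linarith
  · have := key (k + 1)
    simp [Ay_coeff, coeff_derivative, coeff_X_mul, -map_mul, -map_add] at this ⊢
    linarith

lemma der_Fp (l : ℝ) (w : ℕ) :
    derivative (Fp l w) = C (-1 / 2) * (derivative (Ay l w)).comp yy := by
  rw [Fp, derivative_comp, der_yy]

lemma Fp_l (l : ℝ) (hl : 0 < l) (w : ℕ) :
    derivative (Fp l (w + 1)) = C (2 * l) * Fp (l + 1) w := by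
  have := congrArg (fun q => q.comp yy) (Ay_l l hl w)
  simp only [mul_comp, C_comp] at this
  rw [der_Fp, this, Fp]

lemma Fp_zero (l : ℝ) : Fp l 0 = 1 := by
  simp [Fp, Ay, aco, poch]

lemma Fp_ode (l : ℝ) (hl : 0 < l) (w : ℕ) :
    (1 - X ^ 2) * derivative (derivative (Fp l w)) - C (2 * l + 1) * (X * derivative (Fp l w))
      + C (w * (w + 2 * l)) * Fp l w = 0 := by
  have := congrArg (fun q => q.comp yy) (Ay_ode l hl w)
  simp only [mul_comp, C_comp, add_comp, sub_comp, X_comp, zero_comp, ofNat_comp] at this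
  have e : derivative (derivative (Fp l w)) = C (1 / 4) * (derivative (derivative (Ay l w))).comp yy := by
    rw [der_Fp, derivative_C_mul, derivative_comp, der_yy, ← mul_assoc, ← C_mul]
    norm_num
  rw [e, der_Fp, X_eq]
  rw [show C (2 * l + 1) = 2 * C (l + 1 / 2) by
    rw [show (2 : ℝ[X]) = C 2 from rfl, ← C_mul]; congr 1; ring]
  have h4 : (4 : ℝ[X]) * C (1 / 4) = 1 := by
    rw [show (4 : ℝ[X]) = C 4 from rfl, ← C_mul]; norm_num
  have h2 : (2 : ℝ[X]) * C (-1 / 2) = -1 := by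
    rw [show (2 : ℝ[X]) = C 2 from rfl, ← C_mul]; norm_num
  rw [Fp]
  linear_combination this + (yy - yy ^ 2) * (derivative (derivative (Ay l w))).comp yy * h4
    - C (l + 1 / 2) * (1 - 2 * yy) * (derivative (Ay l w)).comp yy * h2

lemma Fp_c (l : ℝ) (hl : 0 < l) (w : ℕ) :
    X * derivative (Fp l (w + 1)) - derivative (Fp l w) = C ((w : ℝ) + 1) * Fp l (w + 1) := by
  have := congrArg (fun q => q.comp yy) (Ay_c l hl w)
  simp only [mul_comp, C_comp, sub_comp, X_comp, ofNat_comp] at this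
  rw [der_Fp, der_Fp, X_eq]
  rw [Fp]
  linear_combination this

lemma geg_one (n w : ℕ) (x : ℝ) : geg (((n : ℝ) + 3) / 2) ((w : ℤ) - 1) x
    = 1 / (n + 1) * (derivative (Fp (((n : ℝ) + 1) / 2) w)).eval x := by
  rcases w with _ | w
  · rw [geg_neg _ _ (by simp), Fp_zero]; simp
  · rw [show ((w + 1 : ℕ) : ℤ) - 1 = (w : ℤ) by push_cast; ring, geg_eq, Fp_l _ (by positivity)]
    rw [show ((n : ℝ) + 1) / 2 + 1 = (n + 3) / 2 by ring]
    have : (n : ℝ) + 1 ≠ 0 := by positivity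
    simp only [eval_mul, eval_C]
    field_simp

lemma geg_two (n w : ℕ) (x : ℝ) : geg (((n : ℝ) + 3) / 2) ((w : ℤ) - 2) x
    = 1 / (n + 1) * (x * (derivative (Fp (((n : ℝ) + 1) / 2) w)).eval x
        - w * (Fp (((n : ℝ) + 1) / 2) w).eval x) := by
  rcases w with _ | w
  · rw [geg_neg _ _ (by simp), Fp_zero]; simp
  · rw [show ((w + 1 : ℕ) : ℤ) - 2 = (w : ℤ) - 1 by push_cast; ring, geg_one]
    have := congrArg (eval x) (Fp_c (((n : ℝ) + 1) / 2) (by positivity) w)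
    simp only [eval_sub, eval_mul, eval_X, eval_C] at this
    push_cast
    congr 1
    linarith
end

section
open Polynomial MeasureTheory Set

lemma cont_w (s : ℝ) (hs : 0 ≤ s) : Continuous fun x : ℝ => (1 - x ^ 2) ^ s :=
  Continuous.rpow_const (by fun_prop) fun _ => Or.inr hs

lemma der_w (s : ℝ) (x : ℝ) (hx : 0 < 1 - x ^ 2) :
    HasDerivAt (fun x : ℝ => (1 - x ^ 2) ^ s) (-2 * s * x * (1 - x ^ 2) ^ (s - 1)) x := by
  have h1 : HasDerivAt (fun x : ℝ => 1 - x ^ 2) (-(2 * x)) x := by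
    simpa using (hasDerivAt_pow 2 x).const_sub 1
  convert! h1.rpow_const (p := s) (Or.inl hx.ne') using 1
  ring

lemma int_w (s : ℝ) (hs : 0 < s) :
    IntervalIntegrable (fun x : ℝ => (1 - x ^ 2) ^ (s - 1)) volume (-1) 1 := by
  have hA : IntervalIntegrable (fun x : ℝ => -2 * s * x * (1 - x ^ 2) ^ (s - 1)) volume (-1) 0 := by
    apply intervalIntegral.intervalIntegrable_deriv_of_nonneg (g := fun x : ℝ => (1 - x ^ 2) ^ s)
    · exact (cont_w s hs.le).continuousOn
    · intro x hx
      norm_num at hx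
      exact der_w s x (by nlinarith)
    · intro x hx
      norm_num at hx
      have : 0 ≤ (1 - x ^ 2) ^ (s - 1) := Real.rpow_nonneg (by nlinarith) _
      have h2 : 0 ≤ -2 * s * x := by nlinarith
      positivity
  have hB : IntervalIntegrable (fun x : ℝ => -(-2 * s * x * (1 - x ^ 2) ^ (s - 1))) volume 0 1 := by
    apply intervalIntegral.intervalIntegrable_deriv_of_nonneg (g := fun x : ℝ => -(1 - x ^ 2) ^ s)
    · exact (cont_w s hs.le).neg.continuousOn
    · intro x hx
      norm_num at hx
      exact (der_w s x (by nlinarith)).neg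
    · intro x hx
      norm_num at hx
      have : 0 ≤ (1 - x ^ 2) ^ (s - 1) := Real.rpow_nonneg (by nlinarith) _
      have h2 : 0 ≤ 2 * s * x := by nlinarith
      have := mul_nonneg h2 this
      linarith
  have hC : IntervalIntegrable (fun x : ℝ => -2 * s * x * (1 - x ^ 2) ^ (s - 1)) volume (-1) 1 := by
    refine hA.trans ?_
    have := hB.neg
    refine this.congr_ae (Filter.Eventually.of_forall fun x => ?_)
    simp
  have hD := (hC.mul_continuousOn (g := fun x => x / (-2 * s)) (by fun_prop)).add
    ((cont_w s hs.le).intervalIntegrable (-1) 1)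
  refine hD.congr_ae ?_
  rw [uIoc_of_le (by norm_num)]
  have h1 : ∀ᵐ x : ℝ ∂volume.restrict (Ioc (-1 : ℝ) 1), x ≠ 1 :=
    ae_restrict_of_ae (by simp [ae_iff])
  filter_upwards [h1, ae_restrict_mem measurableSet_Ioc] with x hx1 hx
  have hlt : x < 1 := lt_of_le_of_ne hx.2 hx1
  have hpos : 0 < 1 - x ^ 2 := by nlinarith [hx.1]
  have : (1 - x ^ 2) ^ s = (1 - x ^ 2) ^ (s - 1) * (1 - x ^ 2) := by
    conv_rhs => rw [← Real.rpow_add_one hpos.ne']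
    congr 1; ring
  simp only [this]
  field_simp
  ring

noncomputable def LL (n : ℕ) (r : ℝ[X]) : ℝ :=
  ∫ x in (-1 : ℝ)..1, (1 - x ^ 2) ^ ((n : ℝ) / 2 - 1) * r.eval x

lemma LL_int (n : ℕ) (hn : 1 ≤ n) (r : ℝ[X]) : IntervalIntegrable
    (fun x : ℝ => (1 - x ^ 2) ^ ((n : ℝ) / 2 - 1) * r.eval x) volume (-1) 1 :=
  (int_w _ (by positivity)).mul_continuousOn r.continuous.continuousOn

lemma LL_add (n : ℕ) (hn : 1 ≤ n) (r t : ℝ[X]) : LL n (r + t) = LL n r + LL n t := by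
  simp only [LL]
  rw [← intervalIntegral.integral_add (LL_int n hn r) (LL_int n hn t)]
  simp [mul_add]

lemma LL_C (n : ℕ) (c : ℝ) (r : ℝ[X]) : LL n (C c * r) = c * LL n r := by
  simp only [LL]
  rw [← intervalIntegral.integral_const_mul]
  congr 1; ext x
  simp; ring

noncomputable def DD (n : ℕ) (r : ℝ[X]) : ℝ[X] := (1 - X ^ 2) * derivative r - C (n : ℝ) * (X * r)

lemma LL_D (n : ℕ) (hn : 1 ≤ n) (r : ℝ[X]) : LL n (DD n r) = 0 := by
  have hs : 0 < (n : ℝ) / 2 := by positivity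
  have := intervalIntegral.integral_eq_sub_of_hasDerivAt_of_le (a := -1) (b := 1)
    (f := fun x : ℝ => (1 - x ^ 2) ^ ((n : ℝ) / 2) * r.eval x)
    (f' := fun x : ℝ => (1 - x ^ 2) ^ ((n : ℝ) / 2 - 1) * (DD n r).eval x) (by norm_num)
    ((cont_w _ hs.le).mul r.continuous).continuousOn ?_ (LL_int n hn _)
  · rw [LL, this]
    simp [hs.ne']
  · intro x hx
    have hpos : 0 < 1 - x ^ 2 := by nlinarith [hx.1, hx.2]
    convert! (der_w ((n : ℝ) / 2) x hpos).mul (r.hasDerivAt x) using 1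
    have : (1 - x ^ 2) ^ ((n : ℝ) / 2) = (1 - x ^ 2) ^ ((n : ℝ) / 2 - 1) * (1 - x ^ 2) := by
      conv_rhs => rw [← Real.rpow_add_one hpos.ne']
      congr 1; ring
    simp only [DD, this, eval_sub, eval_mul, eval_one, eval_pow, eval_X, eval_C]
    ring

lemma LL_shift (n : ℕ) (hn : 1 ≤ n) (r : ℝ[X]) : LL (n + 2) r = LL n ((1 - X ^ 2) * r) := by
  refine intervalIntegral.integral_congr fun x hx => ?_
  rw [uIcc_of_le (by norm_num)] at hx
  have hnn : 0 ≤ 1 - x ^ 2 := by nlinarith [hx.1, hx.2]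
  have hn' : (0 : ℝ) < n := by exact_mod_cast hn
  have : (1 - x ^ 2) ^ (((n + 2 : ℕ) : ℝ) / 2 - 1)
      = (1 - x ^ 2) ^ ((n : ℝ) / 2 - 1) * (1 - x ^ 2) := by
    have e : ((n + 2 : ℕ) : ℝ) / 2 - 1 = ((n : ℝ) / 2 - 1) + 1 := by push_cast; ring
    rw [e, Real.rpow_add_one' hnn (by intro h; linarith)]
  simp only [this, eval_mul, eval_sub, eval_one, eval_pow, eval_X]
  ring

lemma LL_one_rec (n : ℕ) (hn : 1 ≤ n) :
    (n + 3) * LL (n + 2) (1 - X ^ 2) = (n + 2) * LL n (1 - X ^ 2) := by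
  have h := LL_D n hn (X * (1 - X ^ 2))
  have e : DD n (X * (1 - X ^ 2)) = C ((n : ℝ) + 3) * ((1 - X ^ 2) * (1 - X ^ 2))
      + C (-((n : ℝ) + 2)) * (1 - X ^ 2) := by
    simp only [DD, map_add, map_neg, derivative_mul, derivative_X, derivative_sub, derivative_one, derivative_X_pow]
    rw [show (C (3 : ℝ)) = 3 from rfl, show (C (2 : ℝ)) = 2 from rfl]
    simp [show (C (2 : ℝ)) = 2 from rfl]
    ring
  rw [e, LL_add n hn, LL_C, LL_C, ← LL_shift n hn] at h
  linarith

lemma LL_one (n : ℕ) (hn : 1 ≤ n) : LL n (1 - X ^ 2)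
    = Real.sqrt Real.pi * Real.Gamma ((n : ℝ) / 2 + 1) / Real.Gamma ((n : ℝ) / 2 + 3 / 2) := by
  induction n using Nat.strong_induction_on with
  | _ n ih =>
    have hG : Real.Gamma (3 / 2) = √Real.pi / 2 := by
      rw [show (3 / 2 : ℝ) = 1 / 2 + 1 by norm_num, Real.Gamma_add_one (by norm_num),
        Real.Gamma_one_half_eq]; ring
    match n, hn with
    | 1, _ =>
      have : LL 1 (1 - X ^ 2) = Real.pi / 2 := by
        rw [← integral_sqrt_one_sub_sq]
        refine intervalIntegral.integral_congr fun x hx => ?_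
        rw [uIcc_of_le (by norm_num)] at hx
        have hnn : 0 ≤ 1 - x ^ 2 := by nlinarith [hx.1, hx.2]
        simp only [eval_sub, eval_one, eval_pow, eval_X]
        rw [Real.sqrt_eq_rpow, ← Real.rpow_add_one' hnn (by norm_num)]
        norm_num
      rw [this]
      norm_num [hG]
      have := Real.mul_self_sqrt Real.pi_pos.le
      linarith
    | 2, _ =>
      have : LL 2 (1 - X ^ 2) = 4 / 3 := by
        simp [LL]
        norm_num
      rw [this]
      norm_num
      rw [show (5 / 2 : ℝ) = 3 / 2 + 1 by norm_num, Real.Gamma_add_one (by norm_num), hG]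
      have := Real.sqrt_pos.2 Real.pi_pos
      field_simp
      norm_num
    | n + 3, _ =>
      have h := LL_one_rec (n + 1) (by omega)
      rw [ih (n + 1) (by omega) (by omega)] at h
      push_cast at h ⊢
      rw [show ((n : ℝ) + 3) / 2 + 1 = ((n + 1) / 2 + 1) + 1 by ring,
        show ((n : ℝ) + 3) / 2 + 3 / 2 = ((n + 1) / 2 + 3 / 2) + 1 by ring,
        Real.Gamma_add_one (s := ((n : ℝ) + 1) / 2 + 1) (by positivity),
        Real.Gamma_add_one (s := ((n : ℝ) + 1) / 2 + 3 / 2) (by positivity)]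
      have hg := (Real.Gamma_pos_of_pos (show 0 < ((n : ℝ) + 1) / 2 + 3 / 2 by positivity)).ne'
      have h4 : (n : ℝ) + 1 + 3 ≠ 0 := by positivity
      have h5 : ((n : ℝ) + 1) / 2 + 3 / 2 = (n + 1 + 3) / 2 := by ring
      have h6 : ((n : ℝ) + 1) / 2 + 1 = (n + 1 + 2) / 2 := by ring
      apply mul_left_cancel₀ h4
      rw [show n + 1 + 2 = n + 3 from rfl] at h
      rw [h]
      generalize Real.Gamma (((n : ℝ) + 1) / 2 + 3 / 2) = G at *
      rw [h5]
      generalize Real.Gamma (((n : ℝ) + 1) / 2 + 1) = G' at *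
      rw [h6]
      field_simp

/-- Weighted energy identity. -/
lemma LL_energy (n : ℕ) (hn : 1 ≤ n) (m : ℝ) (f g : ℝ[X])
    (hf : (1 - X ^ 2) * derivative (derivative f) - C ((n : ℝ) + 2) * (X * derivative f)
      + C m * f = 0) :
    LL n ((1 - X ^ 2) * ((1 - X ^ 2) * (derivative f * derivative g)))
      = m * LL n ((1 - X ^ 2) * (f * g)) := by
  have h := LL_D n hn ((1 - X ^ 2) * (derivative f * g))
  have e : DD n ((1 - X ^ 2) * (derivative f * g)) =
      (1 - X ^ 2) * ((1 - X ^ 2) * (derivative f * derivative g))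
      + C (-m) * ((1 - X ^ 2) * (f * g)) := by
    rw [map_add, show (C (2 : ℝ)) = 2 from rfl, map_natCast] at hf
    simp only [DD, map_neg, derivative_mul, derivative_sub, derivative_one, derivative_X_pow]
    simp [show (C (2 : ℝ)) = 2 from rfl]
    linear_combination (1 - X ^ 2) * g * hf
  rw [e, LL_add n hn, LL_C] at h
  linarith

lemma Fp_ode' (n w : ℕ) :
    (1 - X ^ 2) * derivative (derivative (Fp (((n : ℝ) + 1) / 2) w))
      - C ((n : ℝ) + 2) * (X * derivative (Fp (((n : ℝ) + 1) / 2) w))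
      + C ((w : ℝ) * (w + n + 1)) * Fp (((n : ℝ) + 1) / 2) w = 0 := by
  have := Fp_ode (((n : ℝ) + 1) / 2) (by positivity) w
  rw [show 2 * (((n : ℝ) + 1) / 2) + 1 = n + 2 by ring,
    show (w : ℝ) * (w + 2 * (((n : ℝ) + 1) / 2)) = w * (w + n + 1) by ring] at this
  exact this

lemma orth (n : ℕ) (hn : 1 ≤ n) (i j : ℕ) (hij : i ≠ j) :
    LL n ((1 - X ^ 2) * (Fp (((n : ℝ) + 1) / 2) i * Fp (((n : ℝ) + 1) / 2) j)) = 0 := by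
  have h1 := LL_energy n hn _ _ (Fp (((n : ℝ) + 1) / 2) j) (Fp_ode' n i)
  have h2 := LL_energy n hn _ _ (Fp (((n : ℝ) + 1) / 2) i) (Fp_ode' n j)
  rw [mul_comm (derivative (Fp _ j)), mul_comm (Fp _ j), h1] at h2
  have h3 : ((i : ℝ) - j) * (i + j + n + 1)
    * LL n ((1 - X ^ 2) * (Fp (((n : ℝ) + 1) / 2) i * Fp (((n : ℝ) + 1) / 2) j)) = 0 := by
    linear_combination h2
  have h4 : (i : ℝ) - j ≠ 0 := sub_ne_zero.2 (by exact_mod_cast hij)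
  have h5 : (i : ℝ) + j + n + 1 ≠ 0 := by positivity
  simpa [h4, h5] using h3

lemma norm_sq (w : ℕ) : ∀ (n : ℕ), 1 ≤ n →
    LL n ((1 - X ^ 2) * (Fp (((n : ℝ) + 1) / 2) w * Fp (((n : ℝ) + 1) / 2) w))
    = (n + 1) * (√Real.pi * Real.Gamma ((n : ℝ) / 2 + 1)) * poch (n + 1) w /
      (w.factorial * (n + 2 * w + 1) * Real.Gamma ((n : ℝ) / 2 + 3 / 2)) := by
  induction w with
  | zero =>
    intro n hn
    have := (Real.Gamma_pos_of_pos (show 0 < (n : ℝ) / 2 + 3 / 2 by positivity)).ne'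
    have h1 : (n : ℝ) + 1 ≠ 0 := by positivity
    simp only [Fp_zero, mul_one, LL_one n hn, poch]
    simp
    field_simp
  | succ w ih =>
    intro n hn
    have h := LL_energy n hn _ _ (Fp (((n : ℝ) + 1) / 2) (w + 1)) (Fp_ode' n (w + 1))
    have h' := ih (n + 2) (by omega)
    rw [← LL_shift n hn, Fp_l _ (by positivity),
      show ((n : ℝ) + 1) / 2 + 1 = (((n + 2 : ℕ) : ℝ) + 1) / 2 by push_cast; ring] at h
    rw [show ∀ (c : ℝ) (r : ℝ[X]), (1 - X ^ 2) * (C c * r * (C c * r))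
      = C c * (C c * ((1 - X ^ 2) * (r * r))) by intros; ring, LL_C, LL_C, h'] at h
    have hg := (Real.Gamma_pos_of_pos (show 0 < (n : ℝ) / 2 + 3 / 2 by positivity)).ne'
    push_cast at h
    rw [show ((n : ℝ) + 2) / 2 + 1 = (n / 2 + 1) + 1 by ring,
        show ((n : ℝ) + 2) / 2 + 3 / 2 = (n / 2 + 3 / 2) + 1 by ring,
        Real.Gamma_add_one (s := (n : ℝ) / 2 + 1) (by positivity),
        Real.Gamma_add_one (s := (n : ℝ) / 2 + 3 / 2) (by positivity)] at h
    have hp : ((n : ℝ) + 1) * ((n + 2) * poch (n + 2 + 1) w) = poch (n + 1) (w + 1) * (n + w + 2) := by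
      have := (poch_succ ((n : ℝ) + 1) (w + 1)).symm.trans (poch_succ' _ (w + 1))
      rw [poch_succ' ((n : ℝ) + 1 + 1)] at this
      rw [show (n : ℝ) + 1 + 1 = n + 2 by ring] at this
      rw [← this]; push_cast; ring
    rw [Nat.factorial_succ]
    push_cast
    have h3 : ((w : ℝ) + 1) * (w + 1 + n + 1) ≠ 0 := by positivity
    apply mul_left_cancel₀ h3
    rw [← h]
    have h5 : (n : ℝ) / 2 + 3 / 2 = (n + 3) / 2 := by ring
    have h6 : (n : ℝ) / 2 + 1 = (n + 2) / 2 := by ring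
    generalize Real.Gamma ((n : ℝ) / 2 + 3 / 2) = G at *
    rw [h5]
    generalize Real.Gamma ((n : ℝ) / 2 + 1) = G' at *
    rw [h6]
    have h7 : poch ((n : ℝ) + 2 + 1) w
      = poch (n + 1) (w + 1) * (n + w + 2) / ((n + 1) * (n + 2)) := by
      rw [← hp]; field_simp
    rw [h7]
    have a1 : (n : ℝ) + 2 + 1 ≠ 0 := by positivity
    have a2 : (n : ℝ) + 3 ≠ 0 := by positivity
    have a3 : (n : ℝ) + 2 + 2 * w + 1 ≠ 0 := by positivity
    have a4 : (n : ℝ) + 2 * (w + 1) + 1 ≠ 0 := by positivity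
    have a5 : ((w.factorial : ℕ) : ℝ) ≠ 0 := by positivity
    field_simp
    ring

lemma den_eq (n w : ℕ) : (2 : ℝ) ^ (w / 2) * Real.Gamma ((n : ℝ) / 2 + 1 + (w / 2 : ℕ)) *
        ∏ k ∈ Finset.range ((w + 1) / 2), ((n : ℝ) + 2 * k + 1)
      = Real.Gamma ((n : ℝ) / 2 + 1) * poch (n + 1) w := by
  induction w with
  | zero => simp [poch]
  | succ w ih =>
    rw [poch_succ, ← mul_assoc, ← ih]
    rcases Nat.even_or_odd' w with ⟨m, rfl | rfl⟩
    · rw [show (2 * m + 1 + 1) / 2 = m + 1 by omega, show (2 * m + 1) / 2 = m by omega,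
        show 2 * m / 2 = m by omega, Finset.prod_range_succ]
      push_cast; ring
    · rw [show (2 * m + 1 + 1 + 1) / 2 = m + 1 by omega, show (2 * m + 1 + 1) / 2 = m + 1 by omega,
        show (2 * m + 1) / 2 = m by omega]
      push_cast
      rw [← add_assoc, Real.Gamma_add_one (by positivity), pow_succ]
      ring
end

section
open Polynomial

lemma LL_diag (n : ℕ) (hn : 1 ≤ n) (p q m : ℝ) (hpq : p + q = n) (f g : ℝ[X])
    (hf : (1 - X ^ 2) * derivative (derivative f) - C ((n : ℝ) + 2) * (X * derivative f)
      + C m * f = 0) :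
    LL n (C p * (C p * (C p * X ^ 2 + C q) * (f * g)
      - C p * X * (1 - X ^ 2) * (derivative f * g + f * derivative g)
      + (1 - X ^ 2) ^ 2 * (derivative f * derivative g)))
    = p * (p * (q + 1) + m) * LL n ((1 - X ^ 2) * (f * g)) := by
  have e : C p * (C p * (C p * X ^ 2 + C q) * (f * g)
      - C p * X * (1 - X ^ 2) * (derivative f * g + f * derivative g)
      + (1 - X ^ 2) ^ 2 * (derivative f * derivative g))
      = C (p * (p * (q + 1))) * ((1 - X ^ 2) * (f * g))
        + (C (-p * p) * DD n (X * (f * g))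
          + C p * ((1 - X ^ 2) * ((1 - X ^ 2) * (derivative f * derivative g)))) := by
    simp only [DD, ← hpq, map_add, map_mul, map_neg, map_one, derivative_mul, derivative_X]
    ring
  rw [e, LL_add n hn, LL_add n hn, LL_C, LL_C, LL_C, LL_D n hn, LL_energy n hn m f g hf]
  ring

noncomputable def cw (n w : ℕ) : ℝ := ((w.factorial : ℝ) * ((n : ℝ) + 1) * ((n : ℝ) + 2 * w + 1) *
        Real.Gamma ((n : ℝ) / 2 + 3 / 2)) /
      (Real.sqrt Real.pi * 2 ^ (w / 2) * Real.Gamma ((n : ℝ) / 2 + 1 + (w / 2 : ℕ)) *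
        ∏ k ∈ Finset.range ((w + 1) / 2), ((n : ℝ) + 2 * k + 1))

lemma cw_nonneg (n w : ℕ) : 0 ≤ cw n w := by
  have h1 := Real.Gamma_pos_of_pos (show 0 < (n : ℝ) / 2 + 3 / 2 by positivity)
  have h2 := Real.Gamma_pos_of_pos (show 0 < (n : ℝ) / 2 + 1 + (w / 2 : ℕ) by positivity)
  have h3 : 0 < ∏ k ∈ Finset.range ((w + 1) / 2), ((n : ℝ) + 2 * k + 1) :=
    Finset.prod_pos fun k _ => by positivity
  unfold cw
  positivity

lemma cw_norm (n w : ℕ) (hn : 1 ≤ n) : cw n w *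
    LL n ((1 - X ^ 2) * (Fp (((n : ℝ) + 1) / 2) w * Fp (((n : ℝ) + 1) / 2) w)) = (n + 1) ^ 2 := by
  rw [norm_sq w n hn, cw]
  rw [show ∀ b c d : ℝ, √Real.pi * b * c * d = √Real.pi * (b * c * d) by intros; ring, den_eq]
  have h1 := (Real.Gamma_pos_of_pos (show 0 < (n : ℝ) / 2 + 3 / 2 by positivity)).ne'
  have h2 := (Real.Gamma_pos_of_pos (show 0 < (n : ℝ) / 2 + 1 by positivity)).ne'
  have h3 := (poch_pos (show 0 < (n : ℝ) + 1 by positivity) w).ne'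
  have h4 := (Real.sqrt_pos.2 Real.pi_pos).ne'
  have h5 : ((w.factorial : ℕ) : ℝ) ≠ 0 := by positivity
  have h6 : (n : ℝ) + 2 * w + 1 ≠ 0 := by positivity
  field_simp

lemma Pmat_eq (n : ℕ) (p : ℝ) (hp : 0 < p) (hpn : p < n) (w : ℕ) (x : ℝ) :
    Pmat n p w x = (1 / ((n : ℝ) + 1)) •
     !![1 / (p + w) * (p * (Fp (((n : ℝ) + 1) / 2) w).eval x
          + x * (derivative (Fp (((n : ℝ) + 1) / 2) w)).eval x),
        1 / (p + w) * (derivative (Fp (((n : ℝ) + 1) / 2) w)).eval x;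
        1 / ((n : ℝ) - p + w) * (derivative (Fp (((n : ℝ) + 1) / 2) w)).eval x,
        1 / ((n : ℝ) - p + w) * (((n : ℝ) - p) * (Fp (((n : ℝ) + 1) / 2) w).eval x
          + x * (derivative (Fp (((n : ℝ) + 1) / 2) w)).eval x)] := by
  have h1 : p + w ≠ 0 := by positivity
  have h2 : (n : ℝ) - p + w ≠ 0 := by
    have : 0 < (n : ℝ) - p := by linarith
    positivity
  have h3 : (n : ℝ) + 1 ≠ 0 := by positivity
  rw [Pmat, geg_eq, geg_one, geg_two]
  ext a b
  fin_cases a <;> fin_cases b <;> simp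
  · field_simp
    ring
  · ring
  · ring
  · field_simp
    ring

lemma diag_final (n : ℕ) (hn : 1 ≤ n) (p q : ℝ) (hp : 0 < p) (hq : 0 < q) (hpq : p + q = n)
    (i j : ℕ) :
    (√(cw n i) * √((p + i) / (p * (q + i + 1)))) * (√(cw n j) * √((p + j) / (p * (q + j + 1))))
      * (1 / (n + 1) * (1 / (p + i)) * (1 / (n + 1) * (1 / (p + j)))) *
      LL n (C p * (C p * (C p * X ^ 2 + C q) *
          (Fp (((n : ℝ) + 1) / 2) i * Fp (((n : ℝ) + 1) / 2) j)
      - C p * X * (1 - X ^ 2) * (derivative (Fp (((n : ℝ) + 1) / 2) i) * Fp (((n : ℝ) + 1) / 2) j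
         + Fp (((n : ℝ) + 1) / 2) i * derivative (Fp (((n : ℝ) + 1) / 2) j))
      + (1 - X ^ 2) ^ 2 * (derivative (Fp (((n : ℝ) + 1) / 2) i)
         * derivative (Fp (((n : ℝ) + 1) / 2) j))))
      = if i = j then 1 else 0 := by
  rw [LL_diag n hn p q _ hpq _ _ (Fp_ode' n i)]
  split_ifs with h
  · subst h
    have h1 := cw_norm n i hn
    have h2 : p + i ≠ 0 := by positivity
    have h3 : q + i + 1 ≠ 0 := by positivity
    have h4 : (n : ℝ) + 1 ≠ 0 := by positivity
    have h5 := Real.mul_self_sqrt (cw_nonneg n i)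
    have h6 := Real.mul_self_sqrt (show 0 ≤ (p + i) / (p * (q + i + 1)) by positivity)
    generalize √(cw n i) = s at *
    generalize √((p + i) / (p * (q + i + 1))) = t at *
    generalize LL n _ = L at *
    have e : p * (q + 1) + (i : ℝ) * (i + n + 1) = (p + i) * (q + i + 1) := by
      rw [← hpq]; ring
    rw [e]
    calc _ = (t * t) * (s * s * L) * ((p * (q + i + 1)) / ((p + i) * (n + 1) ^ 2)) := by
          field_simp
      _ = 1 := by
          rw [h5, h6, h1]
          field_simp
  · rw [orth n hn i j h]; ring

lemma LL_off (n : ℕ) (hn : 1 ≤ n) (p q : ℝ) (f g : ℝ[X]) :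
    LL n (C (p * q) * ((1 - X ^ 2) * (derivative f * g + f * derivative g)
      - C (n : ℝ) * (X * (f * g)))) = 0 := by
  have := LL_D n hn (f * g)
  rw [DD, derivative_mul] at this
  rw [LL_C, this, mul_zero]

lemma Qmat_eq (n : ℕ) (p : ℝ) (hp : 0 < p) (hpn : p < n) (w : ℕ) (x : ℝ) :
    Qmat n p w x =
     !![√(cw n w) * √((p + w) / (p * ((n : ℝ) - p + w + 1))) * (1 / ((n : ℝ) + 1) * (1 / (p + w)))
          * (p * (Fp (((n : ℝ) + 1) / 2) w).eval x
          + x * (derivative (Fp (((n : ℝ) + 1) / 2) w)).eval x),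
        √(cw n w) * √((p + w) / (p * ((n : ℝ) - p + w + 1))) * (1 / ((n : ℝ) + 1) * (1 / (p + w)))
          * (derivative (Fp (((n : ℝ) + 1) / 2) w)).eval x;
        √(cw n w) * √(((n : ℝ) - p + w) / (((n : ℝ) - p) * (p + w + 1)))
          * (1 / ((n : ℝ) + 1) * (1 / ((n : ℝ) - p + w)))
          * (derivative (Fp (((n : ℝ) + 1) / 2) w)).eval x,
        √(cw n w) * √(((n : ℝ) - p + w) / (((n : ℝ) - p) * (p + w + 1)))
          * (1 / ((n : ℝ) + 1) * (1 / ((n : ℝ) - p + w)))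
          * (((n : ℝ) - p) * (Fp (((n : ℝ) + 1) / 2) w).eval x
          + x * (derivative (Fp (((n : ℝ) + 1) / 2) w)).eval x)] := by
  rw [Qmat, Pmat_eq n p hp hpn, Smat]
  change (√(cw n w) • _) * _ = _
  generalize √(cw n w) = s
  generalize √((p + w) / (p * ((n : ℝ) - p + w + 1))) = t
  generalize √(((n : ℝ) - p + w) / (((n : ℝ) - p) * (p + w + 1))) = t'
  ext a b
  fin_cases a <;> fin_cases b <;>
    simp only [Matrix.mul_apply, Fin.sum_univ_two, Matrix.smul_apply, Matrix.diagonal_apply,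
      smul_eq_mul] <;> simp <;> ring

lemma int_LL (n : ℕ) (h : ℝ → ℝ) (c : ℝ) (r : ℝ[X])
    (e : ∀ x, h x = c * ((1 - x ^ 2) ^ ((n : ℝ) / 2 - 1) * r.eval x)) :
    ∫ x in (-1 : ℝ)..1, h x = c * LL n r := by
  rw [LL, ← intervalIntegral.integral_const_mul]
  simp only [e]
end

/-- Orthonormality: `∫_{-1}^{1} Q_i(x) W_{p,n}(x) Q_j(x)^T dx = δ_{ij} I`. -/
theorem stmt_5 (n : ℕ) (hn : 1 ≤ n) (p : ℝ) (hp : 0 < p) (hpn : p < n) :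
    ∀ i j : ℕ,
      (Matrix.of fun a b : Fin 2 =>
          ∫ x in (-1 : ℝ)..1, (Qmat n p i x * Wmat n p x * (Qmat n p j x)ᵀ) a b) =
        if i = j then (1 : Matrix (Fin 2) (Fin 2) ℝ) else 0 := by
  intro i j
  have hq : 0 < (n : ℝ) - p := by linarith
  have hpq : p + ((n : ℝ) - p) = n := by ring
  have hqp : ((n : ℝ) - p) + p = n := by ring
  ext a b
  simp only [Matrix.of_apply]
  fin_cases a <;> fin_cases b
  · refine Eq.trans (int_LL n _ _ _ ?_) ((diag_final n hn p (n - p) hp hq hpq i j).trans ?_)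
    · intro x
      rw [Qmat_eq n p hp hpn, Qmat_eq n p hp hpn, Wmat]
      simp [Matrix.mul_apply, Fin.sum_univ_two, -one_div, -map_sub]
      ring
    · split_ifs <;> simp
  · refine Eq.trans (int_LL n _ 
      ((√(cw n i) * √((p + i) / (p * ((n : ℝ) - p + i + 1))) * (1 / ((n : ℝ) + 1) * (1 / (p + i))))
       * (√(cw n j) * √(((n : ℝ) - p + j) / (((n : ℝ) - p) * (p + j + 1)))
          * (1 / ((n : ℝ) + 1) * (1 / ((n : ℝ) - p + j))))) _ ?_)
        ((congrArg _ (LL_off n hn p (n - p) (Fp (((n : ℝ) + 1) / 2) i)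
          (Fp (((n : ℝ) + 1) / 2) j))).trans ?_)
    · intro x
      rw [Qmat_eq n p hp hpn, Qmat_eq n p hp hpn, Wmat]
      simp [Matrix.mul_apply, Fin.sum_univ_two, -one_div, -map_sub]
      ring
    · split_ifs <;> simp
  · refine Eq.trans (int_LL n _
      ((√(cw n i) * √(((n : ℝ) - p + i) / (((n : ℝ) - p) * (p + i + 1)))
          * (1 / ((n : ℝ) + 1) * (1 / ((n : ℝ) - p + i))))
       * (√(cw n j) * √((p + j) / (p * ((n : ℝ) - p + j + 1)))
          * (1 / ((n : ℝ) + 1) * (1 / (p + j))))) _ ?_)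
        ((congrArg _ (LL_off n hn p (n - p) (Fp (((n : ℝ) + 1) / 2) i)
          (Fp (((n : ℝ) + 1) / 2) j))).trans ?_)
    · intro x
      rw [Qmat_eq n p hp hpn, Qmat_eq n p hp hpn, Wmat]
      simp [Matrix.mul_apply, Fin.sum_univ_two, -one_div, -map_sub]
      ring
    · split_ifs <;> simp
  · refine Eq.trans (int_LL n _ _ _ ?_) ((diag_final n hn (n - p) p hq hp hqp i j).trans ?_)
    · intro x
      rw [Qmat_eq n p hp hpn, Qmat_eq n p hp hpn, Wmat]
      simp [Matrix.mul_apply, Fin.sum_univ_two, -one_div, -map_sub]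
      ring
    · split_ifs <;> simp
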